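/- Let (X_V, T) be a rank-one subshift with unbounded spacer parameter, let (Y, S) be a subshift of ({0,…,b−1})^ℤ, and let φ: X_V → Y be a surjection induced by a sliding block code c of window size R+1, where lh(v_1) > R and c(1^{R+1}) = 1. For n ≥ 1 let α_n be the word of length lh(v_n) − R given by α_n(k) = c(v_n[k, k+R]); each α_n is an initial segment of α_{n+1}, and let W: ℕ → {0,…,b−1} be the limit word having every α_n as an initial segment. Then for every K ∈ ℤ: φ(z_K)(k) = 1 for all k < K − R, and φ(z_K)(k) = W(k − K) for all k ≥ K. Moreover, if α_1 contains an occurrence of 0, then the map K ↦ φ(z_K) is injective. -/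

import Mathlib

/-!
Since `φ` commutes with translation, `φ z_K` is `φ z_0` translated by `K`.
A window of `z_K` lying entirely to the left of `K` is `1^{R+1}`, which gives the value `1`; a window starting at `k ≥ K` lies in the copy of
`V`, hence in a copy of some `v n` (`lt_length_of_isRankOneSeq` makes `v n` long enough), which gives
`W (k - K)`.

For injectivity, `φ z_K = φ z_L` with `K < L` would make `φ z_K` invariant under translation by
`L - K > 0`. As it is constantly `1` far to the left, it would be constantly `1`, whereas the `0` of
`α 1` appears in it (and `0 ≠ 1` because `b ≥ 2`).
-/

/-- The shift map on bi-infinite sequences: `(shiftZ x) k = x (k+1)`. -/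
def shiftZ {α : Type*} (x : ℤ → α) : ℤ → α := fun k => x (k + 1)

/-- `(q, a, v)` is a rank-one construction sequence: `q` is the cutting parameter
(each `q n > 1`), `a` is the spacer parameter (the relevant values are `a n i` for
`1 ≤ i < q n`), `v 0 = 0`, and
`v (n+1) = v n 1^{a n 1} v n 1^{a n 2} ⋯ v n 1^{a n (q n − 1)} v n`. -/
def IsRankOneSeq (q : ℕ → ℕ) (a : ℕ → ℕ → ℕ) (v : ℕ → List (Fin 2)) : Prop :=
  (∀ n, 1 < q n) ∧ v 0 = [0] ∧
    ∀ n, v (n + 1) = v n ++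
      (List.ofFn fun i : Fin (q n - 1) =>
        List.replicate (a n (i.1 + 1)) 1 ++ v n).flatten

/-- `V` is the infinite rank-one word: every `v n` is an initial segment of `V`. -/
def IsLimitWord (v : ℕ → List (Fin 2)) (V : ℕ → Fin 2) : Prop :=
  ∀ (n k : ℕ) (h : k < (v n).length), V k = (v n).get ⟨k, h⟩

/-- The rank-one subshift determined by the infinite rank-one word `V`: the set of
all bi-infinite binary words all of whose finite subwords occur in `V`. -/
def XV (V : ℕ → Fin 2) : Set (ℤ → Fin 2) :=
  {x | ∀ (i : ℤ) (m : ℕ), ∃ t : ℕ, ∀ k : ℕ, k < m → x (i + (k : ℤ)) = V (t + k)}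

/-- The spacer parameter is bounded. -/
def BoundedSpacer (q : ℕ → ℕ) (a : ℕ → ℕ → ℕ) : Prop :=
  ∃ B, ∀ n i, 1 ≤ i → i < q n → a n i ≤ B

/-- The spacer parameter is unbounded. -/
def UnboundedSpacer (q : ℕ → ℕ) (a : ℕ → ℕ → ℕ) : Prop :=
  ∀ B, ∃ n i, 1 ≤ i ∧ i < q n ∧ B < a n i

/-- The element `z_K` of `{0,1}^ℤ`: all `1`s before coordinate `K`, and a copy of
the infinite rank-one word `V` starting at coordinate `K`. -/
def zWord (V : ℕ → Fin 2) (K : ℤ) : ℤ → Fin 2 :=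
  fun k => if k < K then 1 else V (k - K).toNat

theorem lt_length_of_isRankOneSeq {q : ℕ → ℕ} {a : ℕ → ℕ → ℕ} {v : ℕ → List (Fin 2)}
    (hv : IsRankOneSeq q a v) (n : ℕ) : n < (v n).length := by
  obtain ⟨hq, h0, hs⟩ := hv
  induction n with
  | zero => simp [h0]
  | succ n ih =>
    obtain ⟨m, hm⟩ : ∃ m, q n - 1 = m + 1 := ⟨q n - 2, by have := hq n; omega⟩
    rw [hs n, hm, List.ofFn_succ]
    simp only [List.length_append, List.flatten_cons]
    omega

theorem zWord_of_lt {V : ℕ → Fin 2} {K k : ℤ} (h : k < K) : zWord V K k = 1 := if_pos h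

theorem zWord_of_le {V : ℕ → Fin 2} {K k : ℤ} (h : K ≤ k) : zWord V K k = V (k - K).toNat :=
  if_neg (not_lt.mpr h)

theorem zWord_add (V : ℕ → Fin 2) (K k : ℤ) : zWord V K (k + K) = zWord V 0 k := by
  simp only [zWord, add_sub_cancel_right, sub_zero, add_lt_iff_neg_right]

/-- A function on `ℤ` with a positive period that takes the value `u` at all sufficiently small
integers is constantly `u`. -/
theorem eq_of_periodic_of_eventually {β : Type*} {F : ℤ → β} {d : ℤ} (hd : 0 < d)
    (hper : Function.Periodic F d) {u : β} {N : ℤ} (hleft : ∀ k < N, F k = u) (p : ℤ) :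
    F p = u := by
  rw [← hper.sub_zsmul_eq (p - N).toNat.succ, hleft]
  have h1 : p - N ≤ (p - N).toNat := Int.self_le_toNat _
  push_cast
  rw [zsmul_eq_mul]
  push_cast
  nlinarith

/-- Let `(X_V, T)` be a rank-one subshift with unbounded spacer parameter, `(Y,S)`
a subshift of `(Fin b)^ℤ`, and `φ` a surjection of `X_V` onto `Y` induced by a
sliding block code `c` of window size `R+1` with `lh(v 1) > R` and
`c(1^{R+1}) = 1`.  For `n ≥ 1` let `α n` be the word of length `lh(v n) − R`
obtained by applying `c` to `v n`, and let `W` be the limit word having every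
`α n` as an initial segment.  Then for every `K ∈ ℤ`: `φ(z_K)(k) = 1` for all
`k < K − R` and `φ(z_K)(k) = W(k − K)` for all `k ≥ K`.  Moreover, if `α 1`
contains an occurrence of `0`, then `K ↦ φ(z_K)` is injective. -/
theorem image_of_zWord
    (q : ℕ → ℕ) (a : ℕ → ℕ → ℕ) (v : ℕ → List (Fin 2)) (hv : IsRankOneSeq q a v)
    (hubdd : UnboundedSpacer q a)
    (V : ℕ → Fin 2) (hV : IsLimitWord v V)
    (b : ℕ) [NeZero b] (hb : 2 ≤ b)
    (Y : Set (ℤ → Fin b)) (hYclosed : IsClosed Y) (hYinv : shiftZ '' Y = Y)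
    (R : ℕ) (hR : R < (v 1).length)
    (c : (Fin (R + 1) → Fin 2) → Fin b)
    (hc1 : c (fun _ => 1) = 1)
    (φ : (ℤ → Fin 2) → ℤ → Fin b)
    (hφ : ∀ (x : ℤ → Fin 2) (k : ℤ), φ x k = c fun j => x (k + (j.1 : ℤ)))
    (hmaps : ∀ x ∈ XV V, φ x ∈ Y)
    (hsurj : ∀ y ∈ Y, ∃ x ∈ XV V, φ x = y)
    (α : ℕ → List (Fin b))
    (hαlen : ∀ n, (α n).length = (v n).length - R)
    (hαval : ∀ n k : ℕ, k + R < (v n).length →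
      (α n)[k]? = some (c fun j => (v n).getD (k + j.1) 1))
    (W : ℕ → Fin b)
    (hW : ∀ (n k : ℕ) (h : k < (α n).length), W k = (α n).get ⟨k, h⟩) :
    (∀ K : ℤ,
      (∀ k : ℤ, k < K - R → φ (zWord V K) k = 1) ∧
      (∀ k : ℤ, K ≤ k → φ (zWord V K) k = W (k - K).toNat)) ∧
    ((0 : Fin b) ∈ α 1 → Function.Injective fun K : ℤ => φ (zWord V K)) := by
  have hpart : ∀ K : ℤ,
      (∀ k : ℤ, k < K - R → φ (zWord V K) k = 1) ∧
      (∀ k : ℤ, K ≤ k → φ (zWord V K) k = W (k - K).toNat) := by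
    refine fun K => ⟨fun k hk => ?_, fun k hk => ?_⟩
    · rw [hφ, ← hc1]
      congr 1
      funext j
      exact zWord_of_lt (by have := j.2; omega)
    · obtain ⟨m, rfl⟩ : ∃ m : ℕ, k = K + m := ⟨(k - K).toNat, by omega⟩
      have hlen := lt_length_of_isRankOneSeq hv (m + R)
      have hm : m < (α (m + R)).length := by rw [hαlen]; omega
      have hval := hαval (m + R) m hlen
      rw [List.getElem?_eq_getElem hm, Option.some.injEq] at hval
      rw [show (K + (m : ℤ) - K).toNat = m by omega, hW _ m hm, List.get_eq_getElem, hval, hφ]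
      congr 1
      funext j
      have hj : m + j.1 < (v (m + R)).length := by have := j.2; omega
      rw [zWord_of_le (by omega), show (K + (m : ℤ) + (j.1 : ℤ) - K).toNat = m + j.1 by omega,
        hV _ _ hj, List.get_eq_getElem, List.getD_eq_getElem _ _ hj]
  refine ⟨hpart, fun h0 => ?_⟩
  obtain ⟨p, hp, hp0⟩ := List.mem_iff_getElem.mp h0
  have hWp : W p = 0 := by rw [hW 1 p hp, List.get_eq_getElem, hp0]
  have hF0 : ∀ K : ℤ, φ (zWord V K) (p + K) = 0 := fun K => by
    rw [(hpart K).2 _ (by omega), show ((p : ℤ) + K - K).toNat = p by omega, hWp]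
  have htrans : ∀ K k : ℤ, φ (zWord V K) (k + K) = φ (zWord V 0) k := fun K k => by
    rw [hφ, hφ]
    congr 1
    funext j
    rw [show k + K + (j.1 : ℤ) = k + j.1 + K by ring, zWord_add]
  have h01 : (0 : Fin b) ≠ 1 := by
    intro h
    have h' := congrArg Fin.val h
    rw [Fin.val_zero, Fin.val_one', Nat.mod_eq_of_lt (by omega)] at h'
    omega
  have key : ∀ K L : ℤ, K < L → φ (zWord V K) ≠ φ (zWord V L) := by
    intro K L hKL heq
    have hper : Function.Periodic (φ (zWord V K)) (L - K) := fun k => by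
      conv_lhs => rw [heq, show k + (L - K) = (k - K) + L by ring, htrans]
      conv_rhs => rw [show k = (k - K) + K by ring, htrans]
    exact h01 ((hF0 K).symm.trans
      (eq_of_periodic_of_eventually (sub_pos.mpr hKL) hper (hpart K).1 _))
  intro K L hKL
  rcases lt_trichotomy K L with h | h | h
  · exact absurd hKL (key K L h)
  · exact h
  · exact absurd hKL.symm (key L K h)
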